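/- Let x_1,…,x_n, u, v, t be indeterminates, and with notation Φ, R, T as before, T( Φ · ∏_{i=1}^n ((1-t u/x_i)/(1-u/x_i)) · ((1-t v/x_i)/(1-v/x_i)) ) = ∏_{i=1}^{n-2}(t^i+1) · ( t^{2n-1}(1-t^2 u v)/(1-t u v) + t^{n-1} ((u-t v)/(u-v)) R(u) + t^{n-1} ((v-t u)/(v-u)) R(v) + ((1-u v)/(1-t u v)) R(u) R(v) ). -/

import Mathlib

open Finset

/-- `x_i^{σ_i}`: the variable `x i` raised to the sign `σ i` (`true` = `+1`). -/
def sgnVar {F : Type*} [Field F] {n : ℕ} (x : Fin n → F) (σ : Fin n → Bool) (i : Fin n) : F :=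
  if σ i then x i else (x i)⁻¹

/-- `Φ = ∏_i (1-tx_i²)/(1-x_i²) ∏_{i<j} (1-tx_ix_j)/(1-x_ix_j)`. -/
def PhiC {F : Type*} [Field F] {n : ℕ} (t : F) (x : Fin n → F) : F :=
  (∏ i, (1 - t * x i ^ 2) / (1 - x i ^ 2)) *
    ∏ i, ∏ j ∈ Finset.Ioi i, (1 - t * x i * x j) / (1 - x i * x j)

/-- `R(u) = ∏_i ((1-tux_i)/(1-ux_i)) ((1-tu/x_i)/(1-u/x_i))`. -/
def RC {F : Type*} [Field F] {n : ℕ} (t : F) (x : Fin n → F) (u : F) : F :=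
  ∏ i, ((1 - t * u * x i) / (1 - u * x i)) * ((1 - t * u / x i) / (1 - u / x i))

section Helpers
variable {F : Type*} [Field F]

def WW {n : ℕ} (t : F) (f : F → F) (x : Fin n → F) : F :=
  ∑ σ : Fin n → Bool, PhiC t (sgnVar x σ) * ∏ i, f (sgnVar x σ i)

lemma PhiC_succAbove {n : ℕ} (t : F) (y : Fin (n+1) → F) (k : Fin (n+1)) :
    PhiC t y = (1 - t * y k ^ 2) / (1 - y k ^ 2) *
      (∏ i, (1 - t * y k * y (k.succAbove i)) / (1 - y k * y (k.succAbove i))) *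
      PhiC t (fun i => y (k.succAbove i)) := by
  have key : ∀ {m : ℕ} (z : Fin m → F),
      (∏ i, ∏ j ∈ Finset.Ioi i, (1 - t * z i * z j) / (1 - z i * z j))
      = ∏ i, ∏ j, if i < j then (1 - t * z i * z j) / (1 - z i * z j) else 1 := by
    intro m z
    refine Finset.prod_congr rfl fun i _ => ?_
    rw [← Finset.prod_filter]
    refine Finset.prod_congr ?_ fun _ _ => rfl
    ext j; simp
  unfold PhiC
  rw [key, key, Fin.prod_univ_succAbove _ k, Fin.prod_univ_succAbove _ k]
  have e2 : ∀ i : Fin n, (∏ j, if k.succAbove i < j then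
        (1 - t * y (k.succAbove i) * y j) / (1 - y (k.succAbove i) * y j) else 1)
      = (if k.succAbove i < k then (1 - t * y k * y (k.succAbove i)) / (1 - y k * y (k.succAbove i)) else 1) *
        ∏ j, if i < j then (1 - t * y (k.succAbove i) * y (k.succAbove j)) / (1 - y (k.succAbove i) * y (k.succAbove j)) else 1 := by
    intro i
    rw [Fin.prod_univ_succAbove _ k]
    congr 1
    · rw [mul_comm (y k) (y _), mul_assoc, mul_assoc, mul_comm (y k) (y _)]
    · simp
  rw [Finset.prod_congr rfl fun i _ => e2 i, Finset.prod_mul_distrib, Fin.prod_univ_succAbove _ k]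
  have e3 : (∏ i, (1 - t * y k * y (k.succAbove i)) / (1 - y k * y (k.succAbove i)))
     = (∏ i, if k < k.succAbove i then (1 - t * y k * y (k.succAbove i)) / (1 - y k * y (k.succAbove i)) else 1) *
       ∏ i, if k.succAbove i < k then (1 - t * y k * y (k.succAbove i)) / (1 - y k * y (k.succAbove i)) else 1 := by
    rw [← Finset.prod_mul_distrib]
    refine Finset.prod_congr rfl fun i _ => ?_
    rcases lt_or_gt_of_ne (Fin.succAbove_ne k i) with h | h
    · simp [h, h.not_gt]
    · simp [h, h.not_gt]
  rw [e3]
  simp only [lt_irrefl, if_false]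
  ring

def EE {n : ℕ} (t : F) (f : F → F) (x : Fin n → F) (a : F) : F :=
  (1 - t * a ^ 2) / (1 - a ^ 2) * f a * WW t (fun y => f y * ((1 - t * a * y) / (1 - a * y))) x

lemma WW_split {n : ℕ} (t : F) (f : F → F) (x : Fin (n+1) → F) (k : Fin (n+1)) :
    WW t f x = EE t f (fun i => x (k.succAbove i)) (x k)
      + EE t f (fun i => x (k.succAbove i)) (x k)⁻¹ := by
  have key : ∀ (b : Bool) (σ : Fin n → Bool),
      PhiC t (sgnVar x (k.insertNth b σ)) * ∏ i, f (sgnVar x (k.insertNth b σ) i) =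
      (1 - t * (if b then x k else (x k)⁻¹) ^ 2) / (1 - (if b then x k else (x k)⁻¹) ^ 2) *
       f (if b then x k else (x k)⁻¹) *
        (PhiC t (sgnVar (fun i => x (k.succAbove i)) σ) *
          ∏ i, (f (sgnVar (fun i => x (k.succAbove i)) σ i) *
            ((1 - t * (if b then x k else (x k)⁻¹) * sgnVar (fun i => x (k.succAbove i)) σ i) /
             (1 - (if b then x k else (x k)⁻¹) * sgnVar (fun i => x (k.succAbove i)) σ i)))) := by
    intro b σ
    have h1 : sgnVar x (k.insertNth b σ) k = if b then x k else (x k)⁻¹ := by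
      simp [sgnVar]
    have h2 : ∀ i, sgnVar x (k.insertNth b σ) (k.succAbove i)
        = sgnVar (fun i => x (k.succAbove i)) σ i := by
      intro i; simp [sgnVar]
    rw [PhiC_succAbove t _ k, Fin.prod_univ_succAbove _ k]
    simp only [h1, h2]
    rw [Finset.prod_mul_distrib]
    change _ * _ * PhiC t (sgnVar (fun i => x (k.succAbove i)) σ) * _ = _
    ring
  unfold EE WW
  rw [← (Fin.insertNthEquiv (fun _ => Bool) k).sum_comp, Fintype.sum_prod_type]
  rw [Fintype.sum_bool, Finset.mul_sum, Finset.mul_sum]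
  congr 1
  · refine Finset.sum_congr rfl fun σ _ => ?_
    exact key true σ
  · refine Finset.sum_congr rfl fun σ _ => ?_
    exact key false σ

/-- functions given by polynomials of bounded degree -/
def IsP (d : ℕ) (f : F → F) : Prop := ∃ p : Polynomial F, p.natDegree ≤ d ∧ ∀ u, p.eval u = f u

lemma IsP.const (c : F) (d : ℕ) : IsP d (fun _ => c) := ⟨Polynomial.C c, by simp, by simp⟩
lemma IsP.id : IsP 1 (fun u : F => u) := ⟨Polynomial.X, by simp, by simp⟩
lemma IsP.mono {d e : ℕ} {f : F → F} (h : IsP d f) (hde : d ≤ e) : IsP e f := by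
  obtain ⟨p, h1, h2⟩ := h
  exact ⟨p, h1.trans hde, h2⟩
lemma IsP.add {d : ℕ} {f g : F → F} (hf : IsP d f) (hg : IsP d g) : IsP d (fun u => f u + g u) := by
  obtain ⟨p, h1, h2⟩ := hf
  obtain ⟨q, h3, h4⟩ := hg
  exact ⟨p + q, Polynomial.natDegree_add_le_of_degree_le h1 h3, by simp [h2, h4]⟩
lemma IsP.sub {d : ℕ} {f g : F → F} (hf : IsP d f) (hg : IsP d g) : IsP d (fun u => f u - g u) := by
  obtain ⟨p, h1, h2⟩ := hf
  obtain ⟨q, h3, h4⟩ := hg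
  exact ⟨p - q, Polynomial.natDegree_sub_le_of_le h1 h3 |>.trans (by simp), by simp [h2, h4]⟩
lemma IsP.mul {d e : ℕ} {f g : F → F} (hf : IsP d f) (hg : IsP e g) :
    IsP (d + e) (fun u => f u * g u) := by
  obtain ⟨p, h1, h2⟩ := hf
  obtain ⟨q, h3, h4⟩ := hg
  exact ⟨p * q, Polynomial.natDegree_mul_le_of_le h1 h3, by simp [h2, h4]⟩
lemma IsP.mul' {d e m : ℕ} {f g : F → F} (hf : IsP d f) (hg : IsP e g) (h : d + e = m) :
    IsP m (fun u => f u * g u) := h ▸ hf.mul hg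
lemma IsP.sum {ι : Type*} (s : Finset ι) {d : ℕ} {f : ι → F → F} (hf : ∀ i ∈ s, IsP d (f i)) :
    IsP d (fun u => ∑ i ∈ s, f i u) := by
  classical
  induction s using Finset.induction_on with
  | empty => simpa using IsP.const 0 d
  | insert a s ha ih =>
    simp only [Finset.sum_insert ha]
    exact (hf a (by simp)).add (ih fun i hi => hf i (by simp [hi]))
lemma IsP.prod {n : ℕ} {d m : ℕ} {f : Fin n → F → F} (hf : ∀ i, IsP d (f i)) (hm : n * d = m) :
    IsP m (fun u => ∏ i, f i u) := by
  subst hm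
  choose p h1 h2 using hf
  refine ⟨∏ i, p i, ?_, fun u => by simp [Polynomial.eval_prod, h2]⟩
  refine (Polynomial.natDegree_prod_le _ _).trans ?_
  refine (Finset.sum_le_sum fun i _ => h1 i).trans ?_
  simp

lemma IsP.eq_of_pts {ι : Type*} [Fintype ι] {d : ℕ} {f g : F → F} (hf : IsP d f) (hg : IsP d g)
    (pt : ι → F) (hpt : Function.Injective pt) (hd : d < Fintype.card ι)
    (h : ∀ i, f (pt i) = g (pt i)) (u : F) : f u = g u := by
  obtain ⟨p, h1, h2⟩ := hf.sub hg
  have : p = 0 := Polynomial.eq_zero_of_natDegree_lt_card_of_eval_eq_zero p hpt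
    (fun i => by simp only [h2, h, sub_self]) (lt_of_le_of_lt h1 hd)
  have := h2 u
  simp_all
  exact sub_eq_zero.1 this.symm

lemma IsP.eq_of_generic [Infinite F] {d e : ℕ} {f g : F → F} (hf : IsP d f) (hg : IsP e g)
    (S : Set F) (hS : S.Finite) (h : ∀ t ∉ S, f t = g t) (t : F) : f t = g t := by
  obtain ⟨p, h1, h2⟩ := (hf.mono (le_max_left d e)).sub (hg.mono (le_max_right d e))
  have : p = 0 := by
    apply Polynomial.eq_zero_of_infinite_isRoot
    refine hS.infinite_compl.mono fun s hs => ?_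
    simp [Polynomial.IsRoot, h2, h s hs]
  have := h2 t
  simp_all
  exact sub_eq_zero.1 this.symm

def AA (t u y : F) : F := (y - t * u) * (y⁻¹ - u)
def DD {n : ℕ} (x : Fin n → F) (u : F) : F := ∏ i, (x i - u) * ((x i)⁻¹ - u)
def NN {n : ℕ} (t : F) (x : Fin n → F) (u : F) : F := DD x (t * u)

structure Gd {n : ℕ} (x : Fin n → F) : Prop where
  x0 : ∀ i, x i ≠ 0
  x2 : ∀ i, (x i) ^ 2 ≠ 1
  xx : ∀ i j, i ≠ j → x i * x j ≠ 1 ∧ x i ≠ x j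

lemma Gd.sub {n : ℕ} {x : Fin (n+1) → F} (h : Gd x) (k : Fin (n+1)) :
    Gd (fun i => x (k.succAbove i)) :=
  ⟨fun i => h.x0 _, fun i => h.x2 _, fun i j hij => h.xx _ _ (by simpa using hij)⟩

def pts {n : ℕ} (x : Fin n → F) (p : Fin n × Bool) : F := if p.2 then x p.1 else (x p.1)⁻¹

lemma Gd.inj {n : ℕ} {x : Fin n → F} (h : Gd x) : Function.Injective (pts x) := by
  have hx : ∀ i j, x i * x j ≠ 1 := by
    intro i j
    by_cases hij : i = j
    · subst hij; rw [← sq]; exact h.x2 i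
    · exact (h.xx i j hij).1
  have hi : ∀ i j, x i = x j → i = j := by
    intro i j h1
    by_contra h2
    exact (h.xx i j h2).2 h1
  rintro ⟨i, b⟩ ⟨j, c⟩ hij
  cases b <;> cases c <;> simp [pts] at hij ⊢
  · exact hi _ _ hij
  · apply hx i j; rw [← hij]; exact mul_inv_cancel₀ (h.x0 i)
  · apply hx i j; rw [hij]; exact inv_mul_cancel₀ (h.x0 j)
  · exact hi _ _ hij

lemma sgn_or {n : ℕ} (x : Fin n → F) (σ : Fin n → Bool) (i : Fin n) :
    sgnVar x σ i = x i ∨ sgnVar x σ i = (x i)⁻¹ := by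
  unfold sgnVar; split_ifs <;> simp

lemma WW_congr {n : ℕ} (t : F) (f g : F → F) (x : Fin n → F)
    (h : ∀ i, f (x i) = g (x i) ∧ f (x i)⁻¹ = g (x i)⁻¹) : WW t f x = WW t g x := by
  unfold WW
  refine Finset.sum_congr rfl fun σ _ => ?_
  congr 1
  refine Finset.prod_congr rfl fun i _ => ?_
  rcases sgn_or x σ i with e | e <;> rw [e]
  exacts [(h i).1, (h i).2]

lemma WW_mul {n : ℕ} (t : F) (f : F → F) (c : F → F) (x : Fin n → F)
    (h : ∀ i, c (x i)⁻¹ = c (x i)) : WW t (fun y => c y * f y) x = (∏ i, c (x i)) * WW t f x := by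
  unfold WW
  rw [Finset.mul_sum]
  refine Finset.sum_congr rfl fun σ _ => ?_
  rw [Finset.prod_mul_distrib]
  have : ∏ i, c (sgnVar x σ i) = ∏ i, c (x i) := by
    refine Finset.prod_congr rfl fun i _ => ?_
    rcases sgn_or x σ i with e | e <;> rw [e]
    exact h i
  rw [this]; ring

lemma pts_or {n : ℕ} (x : Fin n → F) (p : Fin n × Bool) :
    pts x p = x p.1 ∨ pts x p = (x p.1)⁻¹ := by
  unfold pts; split_ifs <;> simp

lemma DD_split {n : ℕ} (x : Fin (n+1) → F) (p : Fin (n+1) × Bool) (u : F) :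
    DD x u = (pts x p - u) * ((pts x p)⁻¹ - u) * DD (fun i => x (p.1.succAbove i)) u := by
  unfold DD
  rw [Fin.prod_univ_succAbove _ p.1]
  rcases pts_or x p with e | e <;> rw [e]
  rw [inv_inv]; ring

lemma WW_split' {n : ℕ} (t : F) (f : F → F) (x : Fin (n+1) → F) (p : Fin (n+1) × Bool) :
    WW t f x = EE t f (fun i => x (p.1.succAbove i)) (pts x p)
      + EE t f (fun i => x (p.1.succAbove i)) (pts x p)⁻¹ := by
  rw [WW_split t f x p.1]
  rcases pts_or x p with e | e <;> rw [e]
  rw [inv_inv, add_comm]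

lemma Gd.xx' {n : ℕ} {x : Fin n → F} (h : Gd x) (i j : Fin n) : x i * x j ≠ 1 := by
  by_cases hij : i = j
  · subst hij; rw [← sq]; exact h.x2 i
  · exact (h.xx i j hij).1

lemma Gd.p0 {n : ℕ} {x : Fin n → F} (h : Gd x) (p : Fin n × Bool) : pts x p ≠ 0 := by
  rcases pts_or x p with e | e <;> rw [e]
  exacts [h.x0 _, inv_ne_zero (h.x0 _)]

lemma Gd.p2 {n : ℕ} {x : Fin n → F} (h : Gd x) (p : Fin n × Bool) : 1 - pts x p ^ 2 ≠ 0 := by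
  rw [sub_ne_zero]
  rcases pts_or x p with e | e <;> rw [e]
  · exact (h.x2 _).symm
  · rw [inv_pow]; intro h1
    exact h.x2 p.1 (inv_eq_one.1 h1.symm)

lemma Gd.pp {n : ℕ} {x : Fin n → F} (h : Gd x) (p q : Fin n × Bool) (hpq : p.1 ≠ q.1) :
    1 - pts x p * pts x q ≠ 0 := by
  intro h1
  have h2 : pts x p = pts x (q.1, !q.2) := by
    have : pts x (q.1, !q.2) = (pts x q)⁻¹ := by
      rcases q with ⟨q, b⟩; cases b <;> simp [pts]
    rw [this]
    exact eq_inv_of_mul_eq_one_left (sub_eq_zero.1 h1).symm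
  have := congrArg Prod.fst (h.inj h2)
  exact hpq this

lemma WW_at {n : ℕ} (t : F) (c : F → F) {x : Fin (n+1) → F} (h : Gd x) (p : Fin (n+1) × Bool) :
    WW t (fun y => AA t (pts x p) y * c y) x
      = (1 - t) * (1 - t * pts x p ^ 2) * c (pts x p) *
        NN t (fun i => x (p.1.succAbove i)) (pts x p) *
        WW t c (fun i => x (p.1.succAbove i)) := by
  rw [WW_split' t _ x p]
  have ha0 := h.p0 p
  have ha2 := h.p2 p
  have hai : ∀ i b, 1 - pts x p * pts x (p.1.succAbove i, b) ≠ 0 := fun i b =>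
    h.pp p _ (Fin.succAbove_ne _ _).symm
  generalize pts x p = a at *
  have e0 : EE t (fun y => AA t a y * c y) (fun i => x (p.1.succAbove i)) a⁻¹ = 0 := by
    simp [EE, AA]
  rw [e0, add_zero]
  unfold EE
  have key : ∀ y : F, y ≠ 0 → 1 - a * y ≠ 0 →
      AA t a y * c y * ((1 - t * a * y) / (1 - a * y)) = (y - t * a) * (y⁻¹ - t * a) * c y := by
    intro y hy hay
    have hay' : 1 - y * a ≠ 0 := by rwa [mul_comm]
    unfold AA
    field_simp
  rw [WW_congr t _ (fun y => ((y - t * a) * (y⁻¹ - t * a)) * c y), WW_mul t c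
    (fun y => ((y - t * a) * (y⁻¹ - t * a)))]
  · have : (1 - t * a ^ 2) / (1 - a ^ 2) * (AA t a a * c a) = (1 - t) * (1 - t * a ^ 2) * c a := by
      unfold AA
      field_simp
    rw [this]
    unfold NN DD
    ring
  · intro i
    simp only [inv_inv]; ring
  · intro i
    exact ⟨key _ (h.x0 _) (by simpa [pts] using hai i true),
      key _ (inv_ne_zero (h.x0 _)) (by simpa [pts] using hai i false)⟩

def PP (t : F) (m : ℕ) : F := ∏ i ∈ Finset.range m, (t ^ (i + 1) + 1)

structure GT {n : ℕ} (t : F) (x : Fin n → F) : Prop where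
  t0 : t ≠ 0
  h1 : ∀ i j, t ≠ x i * x j
  h2 : ∀ i j, t ≠ x i / x j

lemma GT.sub {n : ℕ} {t : F} {x : Fin (n+1) → F} (h : GT t x) (k : Fin (n+1)) :
    GT t (fun i => x (k.succAbove i)) := ⟨h.t0, fun _ _ => h.h1 _ _, fun _ _ => h.h2 _ _⟩

lemma IsP.AA (t y : F) : IsP 2 (fun u => AA t u y) := by
  unfold _root_.AA
  exact IsP.mul' (d := 1) (e := 1) ((IsP.const _ _).sub (IsP.mul' (IsP.const t 0) IsP.id rfl))
    ((IsP.const _ _).sub IsP.id) rfl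

lemma IsP.DD {n : ℕ} (x : Fin n → F) : IsP (2 * n) (fun u => DD x u) := by
  unfold _root_.DD
  refine IsP.prod (d := 2) (fun i => ?_) (by ring)
  exact IsP.mul' (d := 1) (e := 1) ((IsP.const _ _).sub IsP.id) ((IsP.const _ _).sub IsP.id) rfl

lemma IsP.NN {n : ℕ} (t : F) (x : Fin n → F) : IsP (2 * n) (fun u => NN t x u) := by
  unfold _root_.NN _root_.DD
  refine IsP.prod (d := 2) (fun i => ?_) (by ring)
  exact IsP.mul' (d := 1) (e := 1) ((IsP.const _ _).sub (IsP.mul' (IsP.const t 0) IsP.id rfl))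
   ((IsP.const _ _).sub (IsP.mul' (IsP.const t 0) IsP.id rfl)) rfl

lemma IsP.WA {n : ℕ} (t : F) (c : F → F) (x : Fin n → F) :
    IsP (2 * n) (fun u => WW t (fun y => _root_.AA t u y * c y) x) := by
  unfold WW
  refine IsP.sum _ fun σ _ => ?_
  refine IsP.mul' (IsP.const _ 0) (IsP.prod (d := 2) (fun i => ?_) rfl) (by ring)
  exact IsP.mul' (IsP.AA _ _) (IsP.const _ 0) rfl

lemma DD_zero {n : ℕ} {x : Fin n → F} (h : Gd x) : DD x 0 = 1 := by
  unfold DD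
  exact Finset.prod_eq_one fun i _ => by simp [h.x0 i]

lemma NN_zero {n : ℕ} (t : F) {x : Fin n → F} (h : Gd x) : NN t x 0 = 1 := by
  unfold NN; rw [mul_zero, DD_zero h]

lemma WW_zero {n : ℕ} (t : F) (c : F → F) {x : Fin n → F} (h : Gd x) :
    WW t (fun y => AA t 0 y * c y) x = WW t c x := by
  apply WW_congr
  intro i
  simp [AA, h.x0 i]

lemma WW_q {n : ℕ} (t : F) {x : Fin (n+1) → F} (h : Gd x) (ht : t ≠ 0) :
    WW t (fun y => AA t (x 0 / t) y * 1) x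
      = t ^ (n+1) * DD x (x 0 / t) * WW t (fun _ => 1) (fun i => x (Fin.succAbove 0 i)) := by
  rw [WW_split' t _ x (0, false), DD_split x (0, false)]
  have ha0 := h.p0 (0, false)
  have ha2 := h.p2 (0, false)
  have hai : ∀ i b, 1 - pts x (0, false) * pts x (Fin.succAbove 0 i, b) ≠ 0 := fun i b =>
    h.pp (0, false) _ (Fin.succAbove_ne _ _).symm
  have hxa : x 0 = (pts x (0, false))⁻¹ := by simp [pts]
  rw [hxa]
  generalize pts x (0, false) = a at *
  have e0 : EE t (fun y => AA t (a⁻¹ / t) y * 1) (fun i => x (Fin.succAbove 0 i)) a⁻¹ = 0 := by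
    have : AA t (a⁻¹ / t) a⁻¹ = 0 := by
      unfold AA; field_simp; simp
    simp [EE, this]
  rw [e0, add_zero]
  unfold EE
  have key : ∀ y : F, y ≠ 0 → 1 - a * y ≠ 0 →
      AA t (a⁻¹ / t) y * 1 * ((1 - t * a * y) / (1 - a * y))
        = (t * ((y - a⁻¹ / t) * (y⁻¹ - a⁻¹ / t))) * 1 := by
    intro y hy hay
    have hay' : 1 - y * a ≠ 0 := by rwa [mul_comm]
    unfold AA
    field_simp
    ring
  rw [WW_congr t _ (fun y => (t * ((y - a⁻¹ / t) * (y⁻¹ - a⁻¹ / t))) * 1), WW_mul t (fun _ => 1)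
    (fun y => t * ((y - a⁻¹ / t) * (y⁻¹ - a⁻¹ / t)))]
  · have : (1 - t * a ^ 2) / (1 - a ^ 2) * (AA t (a⁻¹ / t) a * 1) =
        t * ((a - a⁻¹ / t) * (a⁻¹ - a⁻¹ / t)) := by
      unfold AA
      field_simp
      ring
    rw [this, Finset.prod_mul_distrib]
    unfold DD
    simp
    ring
  · intro i
    simp only [inv_inv]; ring
  · intro i
    exact ⟨key _ (h.x0 _) (by simpa [pts] using hai i true),
      key _ (inv_ne_zero (h.x0 _)) (by simpa [pts] using hai i false)⟩

lemma S1_of {n : ℕ} (t : F) {x : Fin (n+1) → F} (h : Gd x) (g : GT t x)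
    (h0 : ∀ k : Fin (n+1), WW t (fun _ => 1) (fun i => x (k.succAbove i)) = PP t n) (u : F) :
    WW t (fun y => AA t u y * 1) x = PP t n * (t ^ (n+1) * DD x u + NN t x u) := by
  refine IsP.eq_of_pts (ι := Option (Fin (n+1) × Bool)) (d := 2 * (n+1))
    (IsP.WA t (fun _ => 1) x) (g := fun u => PP t n * (t ^ (n+1) * DD x u + NN t x u))
    (IsP.mul' (IsP.const _ 0) (IsP.add (IsP.mul' (IsP.const _ 0) (IsP.DD x) (by ring)) (IsP.NN t x))
      (by ring))
    (fun o => o.elim (x 0 / t) (pts x)) ?_ (by simp; omega) ?_ u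
  · have hne : ∀ p, x 0 / t ≠ pts x p := by
      intro p hp
      have := h.x0 p.1
      have := h.x0 0
      have := g.t0
      rcases pts_or x p with e | e <;> rw [e] at hp
      · apply g.h2 0 p.1; field_simp at hp ⊢; rw [hp, mul_comm]
      · apply g.h1 0 p.1; field_simp at hp ⊢; exact hp.symm
    rintro (_ | p) (_ | q) hpq
    · rfl
    · exact absurd hpq (hne q)
    · exact absurd hpq.symm (hne p)
    · exact congrArg some (h.inj hpq)
  · rintro (_ | p)
    · simp only [Option.elim]
      rw [WW_q t h g.t0, h0 0]
      have : NN t x (x 0 / t) = 0 := by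
        unfold NN
        rw [mul_div_cancel₀ _ g.t0, DD_split x (0, true)]
        simp [pts]
      rw [this]; ring
    · simp only [Option.elim]
      rw [WW_at t _ h p, h0]
      have hp := h.p0 p
      have h1 : DD x (pts x p) = 0 := by rw [DD_split x p]; simp
      have h2 : NN t x (pts x p) = (1 - t) * (1 - t * pts x p ^ 2) *
          NN t (fun i => x (p.1.succAbove i)) (pts x p) := by
        unfold NN; rw [DD_split x p]; field_simp
      rw [h1, h2]; ring

lemma S0 {n : ℕ} (t : F) {x : Fin n → F} (h : Gd x) (g : GT t x) :
    WW t (fun _ => 1) x = PP t n := by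
  induction n with
  | zero => simp [WW, PP, PhiC]
  | succ n ih =>
    have := S1_of t h g (fun k => ih (h.sub k) (g.sub k)) 0
    rw [WW_zero t _ h, DD_zero h, NN_zero t h] at this
    rw [this]
    simp [PP, Finset.prod_range_succ]

lemma S1 {n : ℕ} (t : F) {x : Fin (n+1) → F} (h : Gd x) (g : GT t x) (u : F) :
    WW t (fun y => AA t u y * 1) x = PP t n * (t ^ (n+1) * DD x u + NN t x u) :=
  S1_of t h g (fun k => S0 t (h.sub k) (g.sub k)) u

lemma S2 {n : ℕ} (t : F) {x : Fin (n+2) → F} (h : Gd x) (g : GT t x) (v : F) (hv0 : v ≠ 0)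
    (hv : ∀ p, v ≠ pts x p) (htv : ∀ p, 1 / (t * v) ≠ pts x p) (htvv : 1 / (t * v) ≠ v) (u : F) :
    (u - v) * (1 - t * v * u) * WW t (fun y => AA t u y * (AA t v y * 1)) x
     = PP t n * (t ^ (2 * n + 3) * DD x v * ((1 - t ^ 2 * v * u) * (u - v) * DD x u)
        + t ^ (n+1) * DD x v * ((u - t * v) * (1 - t * v * u) * NN t x u)
        - t ^ (n+1) * NN t x v * ((v - t * u) * (1 - t * v * u) * DD x u)
        + NN t x v * ((1 - v * u) * (u - v) * NN t x u)) := by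
  have lin : ∀ a b : F, IsP 1 (fun u => a - b * u) := fun a b =>
    (IsP.const _ _).sub (IsP.mul' (IsP.const b 0) IsP.id rfl)
  have lin' : ∀ a : F, IsP 1 (fun u => u - a) := fun a => IsP.id.sub (IsP.const _ _)
  have q : ∀ {f k : F → F}, IsP 1 f → IsP 1 k → IsP 2 (fun u => f u * k u) :=
    fun a b => a.mul' b rfl
  have cc : ∀ (c : F) {d : ℕ} {k : F → F}, IsP d k → IsP d (fun u => c * k u) :=
    fun c d k hk => (IsP.const c 0).mul' hk (by ring)
  refine IsP.eq_of_pts (ι := Option (Option (Option (Fin (n+2) × Bool)))) (d := 2 * (n+2) + 2)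
    (f := fun u => (u - v) * (1 - t * v * u) * WW t (fun y => AA t u y * (AA t v y * 1)) x)
    (g := fun u => PP t n * (t ^ (2 * n + 3) * DD x v * ((1 - t ^ 2 * v * u) * (u - v) * DD x u)
        + t ^ (n+1) * DD x v * ((u - t * v) * (1 - t * v * u) * NN t x u)
        - t ^ (n+1) * NN t x v * ((v - t * u) * (1 - t * v * u) * DD x u)
        + NN t x v * ((1 - v * u) * (u - v) * NN t x u)))
    (IsP.mul' (q (lin' _) (lin _ _)) (IsP.WA t _ x) (by ring))
    (cc _ ((((cc _ (IsP.mul' (q (lin _ _) (lin' _)) (IsP.DD x) (by ring))).add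
        (cc _ (IsP.mul' (q (lin' _) (lin _ _)) (IsP.NN t x) (by ring)))).sub
        (cc _ (IsP.mul' (q (lin _ _) (lin _ _)) (IsP.DD x) (by ring)))).add
        (cc _ (IsP.mul' (q (lin _ _) (lin' _)) (IsP.NN t x) (by ring)))))
    (fun o => o.elim 0 (fun o => o.elim v (fun o => o.elim (1 / (t * v)) (pts x))))
    ?_ (by simp; omega) ?_ u
  · have h00 : 1 / (t * v) ≠ 0 := one_div_ne_zero (mul_ne_zero g.t0 hv0)
    rintro (_ | _ | _ | p) (_ | _ | _ | q) hpq <;> simp only [Option.elim] at hpq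
    · rfl
    · exact absurd hpq.symm hv0
    · exact absurd hpq.symm h00
    · exact absurd hpq.symm (h.p0 _)
    · exact absurd hpq hv0
    · rfl
    · exact absurd hpq.symm htvv
    · exact absurd hpq (hv _)
    · exact absurd hpq h00
    · exact absurd hpq htvv
    · rfl
    · exact absurd hpq (htv _)
    · exact absurd hpq (h.p0 _)
    · exact absurd hpq.symm (hv _)
    · exact absurd hpq.symm (htv _)
    · rw [h.inj hpq]
  · rintro (_ | _ | _ | p) <;> simp only [Option.elim]
    · rw [WW_zero t _ h, S1 t h g v, DD_zero h, NN_zero t h]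
      simp only [PP, Finset.prod_range_succ]
      ring
    · ring
    · have ht0 := g.t0
      have h1 : NN t x (1 / (t * v)) * v ^ (2 * (n + 2)) = DD x v := by
        unfold NN DD
        rw [pow_mul, ← Fin.prod_const, ← Finset.prod_mul_distrib]
        refine Finset.prod_congr rfl fun i _ => ?_
        have := h.x0 i
        field_simp
        ring
      have h2 : NN t x v = DD x (1 / (t * v)) * (t * v) ^ (2 * (n + 2)) := by
        unfold NN DD
        rw [pow_mul, ← Fin.prod_const, ← Finset.prod_mul_distrib]
        refine Finset.prod_congr rfl fun i _ => ?_
        have := h.x0 i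
        field_simp
        ring
      rw [← h1, h2]
      generalize NN t x (1 / (t * v)) = A
      generalize DD x (1 / (t * v)) = B
      have e1 : t * v * (1 / (t * v)) = 1 := by field_simp
      have e2 : t ^ 2 * v * (1 / (t * v)) = t := by field_simp
      have e3 : v * (1 / (t * v)) = 1 / t := by field_simp
      rw [e1, e2, e3]
      field_simp
      ring
    · rw [WW_at t _ h p, S1 t (h.sub _) (g.sub _)]
      have hp := h.p0 p
      have h1 : DD x (pts x p) = 0 := by rw [DD_split x p]; simp
      have h2 : NN t x (pts x p) = (1 - t) * (1 - t * pts x p ^ 2) *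
          NN t (fun i => x (p.1.succAbove i)) (pts x p) := by
        unfold NN; rw [DD_split x p]; field_simp
      have h3 : NN t x v = (pts x p - t * v) * ((pts x p)⁻¹ - t * v) *
          NN t (fun i => x (p.1.succAbove i)) v := by
        unfold NN; rw [DD_split x p]
      rw [h1, h2, h3, DD_split x p v]
      generalize NN t (fun i => x (p.1.succAbove i)) v = A
      generalize NN t (fun i => x (p.1.succAbove i)) (pts x p) = B
      generalize DD (fun i => x (p.1.succAbove i)) v = C
      generalize pts x p = a at *
      unfold AA
      field_simp
      ring

/-- functions given by polynomials -/
def IsQ (f : F → F) : Prop := ∃ d, IsP d f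

lemma IsQ.const (c : F) : IsQ (fun _ => c) := ⟨0, IsP.const c 0⟩
lemma IsQ.id : IsQ (fun u : F => u) := ⟨1, IsP.id⟩
lemma IsQ.add {f g : F → F} (hf : IsQ f) (hg : IsQ g) : IsQ (fun u => f u + g u) := by
  obtain ⟨d, hf⟩ := hf
  obtain ⟨e, hg⟩ := hg
  exact ⟨_, (hf.mono (le_max_left d e)).add (hg.mono (le_max_right d e))⟩
lemma IsQ.sub {f g : F → F} (hf : IsQ f) (hg : IsQ g) : IsQ (fun u => f u - g u) := by
  obtain ⟨d, hf⟩ := hf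
  obtain ⟨e, hg⟩ := hg
  exact ⟨_, (hf.mono (le_max_left d e)).sub (hg.mono (le_max_right d e))⟩
lemma IsQ.mul {f g : F → F} (hf : IsQ f) (hg : IsQ g) : IsQ (fun u => f u * g u) := by
  obtain ⟨d, hf⟩ := hf
  obtain ⟨e, hg⟩ := hg
  exact ⟨_, hf.mul hg⟩
lemma IsQ.divc {f : F → F} (hf : IsQ f) (c : F) : IsQ (fun u => f u / c) := by
  simpa only [div_eq_mul_inv] using hf.mul (IsQ.const c⁻¹)
lemma IsQ.sum {ι : Type*} (s : Finset ι) {f : ι → F → F} (hf : ∀ i, IsQ (f i)) :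
    IsQ (fun u => ∑ i ∈ s, f i u) := by
  classical
  induction s using Finset.induction_on with
  | empty => simpa using IsQ.const (0 : F)
  | insert a s ha ih =>
    simp only [Finset.sum_insert ha]
    exact (hf a).add ih
lemma IsQ.prod {ι : Type*} (s : Finset ι) {f : ι → F → F} (hf : ∀ i, IsQ (f i)) :
    IsQ (fun u => ∏ i ∈ s, f i u) := by
  classical
  induction s using Finset.induction_on with
  | empty => simpa using IsQ.const (1 : F)
  | insert a s ha ih =>
    simp only [Finset.prod_insert ha]
    exact (hf a).mul ih
lemma IsQ.pow {f : F → F} (hf : IsQ f) (n : ℕ) : IsQ (fun u => f u ^ n) := by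
  induction n with
  | zero => simpa using IsQ.const (1 : F)
  | succ n ih => simpa only [pow_succ] using ih.mul hf

lemma IsQ.tc (a b : F) : IsQ (fun t => a - t * b) :=
  (IsQ.const a).sub (IsQ.id.mul (IsQ.const b))

lemma IsQ.PhiC {n : ℕ} (y : Fin n → F) : IsQ (fun t => PhiC t y) := by
  unfold _root_.PhiC
  refine IsQ.mul (IsQ.prod _ fun i => ?_) (IsQ.prod _ fun i => IsQ.prod _ fun j => ?_)
  · exact (IsQ.tc _ _).divc _
  · simpa only [mul_assoc] using (IsQ.tc _ _).divc _

lemma IsQ.AA (u y : F) : IsQ (fun t => AA t u y) := (IsQ.tc _ _).mul (IsQ.const _)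

lemma IsQ.NN {n : ℕ} (x : Fin n → F) (u : F) : IsQ (fun t => NN t x u) := by
  unfold _root_.NN DD
  exact IsQ.prod _ fun _ => (IsQ.tc _ _).mul (IsQ.tc _ _)

lemma IsQ.PP (m : ℕ) : IsQ (fun t : F => PP t m) :=
  IsQ.prod _ fun i => (IsQ.id.pow (i + 1)).add (IsQ.const 1)

lemma S2g [Infinite F] {n : ℕ} (t : F) {x : Fin (n+2) → F} (h : Gd x) (v : F) (hv0 : v ≠ 0)
    (hv : ∀ p, v ≠ pts x p) (u : F) :
    (u - v) * (1 - t * v * u) * WW t (fun y => AA t u y * (AA t v y * 1)) x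
     = PP t n * (t ^ (2 * n + 3) * DD x v * ((1 - t ^ 2 * v * u) * (u - v) * DD x u)
        + t ^ (n+1) * DD x v * ((u - t * v) * (1 - t * v * u) * NN t x u)
        - t ^ (n+1) * NN t x v * ((v - t * u) * (1 - t * v * u) * DD x u)
        + NN t x v * ((1 - v * u) * (u - v) * NN t x u)) := by
  have L : IsQ (fun t => (u - v) * (1 - t * v * u) * WW t (fun y => AA t u y * (AA t v y * 1)) x) := by
    refine IsQ.mul (IsQ.mul (IsQ.const _) ((IsQ.const _).sub
      ((IsQ.id.mul (IsQ.const _)).mul (IsQ.const _)))) ?_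
    exact IsQ.sum _ fun σ => (IsQ.PhiC _).mul (IsQ.prod _ fun i =>
      (IsQ.AA _ _).mul ((IsQ.AA _ _).mul (IsQ.const _)))
  have hvu : IsQ (fun t => 1 - t * v * u) := (IsQ.const _).sub
      ((IsQ.id.mul (IsQ.const _)).mul (IsQ.const _))
  have R : IsQ (fun t => PP t n * (t ^ (2 * n + 3) * DD x v * ((1 - t ^ 2 * v * u) * (u - v) * DD x u)
        + t ^ (n+1) * DD x v * ((u - t * v) * (1 - t * v * u) * NN t x u)
        - t ^ (n+1) * NN t x v * ((v - t * u) * (1 - t * v * u) * DD x u)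
        + NN t x v * ((1 - v * u) * (u - v) * NN t x u))) := by
    refine (IsQ.PP n).mul (IsQ.add (IsQ.sub (IsQ.add ?_ ?_) ?_) ?_)
    · exact ((IsQ.id.pow _).mul (IsQ.const _)).mul ((((IsQ.const _).sub
        (((IsQ.id.pow 2).mul (IsQ.const _)).mul (IsQ.const _))).mul (IsQ.const _)).mul (IsQ.const _))
    · exact ((IsQ.id.pow _).mul (IsQ.const _)).mul (((IsQ.tc _ _).mul hvu).mul (IsQ.NN _ _))
    · exact ((IsQ.id.pow _).mul (IsQ.NN _ _)).mul (((IsQ.tc _ _).mul hvu).mul (IsQ.const _))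
    · exact (IsQ.NN _ _).mul ((IsQ.const _).mul (IsQ.NN _ _))
  obtain ⟨d, L⟩ := L
  obtain ⟨e, R⟩ := R
  refine IsP.eq_of_generic L R
    ({0, 1 / v ^ 2} ∪ (Set.range fun p => 1 / (v * pts x p)) ∪
      (Set.range fun p : Fin (n+2) × Fin (n+2) => x p.1 * x p.2) ∪
      (Set.range fun p : Fin (n+2) × Fin (n+2) => x p.1 / x p.2)) ?_ ?_ t
  · exact (((Set.toFinite _).union (Set.finite_range _)).union (Set.finite_range _)).union
      (Set.finite_range _)
  · intro t ht
    simp only [Set.mem_union, Set.mem_insert_iff, Set.mem_singleton_iff, Set.mem_range, not_or,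
      not_exists] at ht
    obtain ⟨⟨⟨⟨ht0, ht1⟩, ht2⟩, ht3⟩, ht4⟩ := ht
    refine S2 t h ⟨ht0, fun i j => Ne.symm (ht3 (i, j)), fun i j => Ne.symm (ht4 (i, j))⟩ v hv0 hv ?_ ?_ u
    · intro p hp
      apply ht2 p
      rw [← hp]; field_simp
    · intro hp
      apply ht1
      field_simp at hp ⊢
      linear_combination -hp

lemma stmt_inf [Infinite F] {n : ℕ} (hn : 2 ≤ n) (x : Fin n → F) (u v t : F)
    (hx0 : ∀ i, x i ≠ 0) (hv0 : v ≠ 0)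
    (hx2 : ∀ i, (x i) ^ 2 ≠ 1)
    (hxx : ∀ i j, i ≠ j → x i * x j ≠ 1 ∧ x i ≠ x j)
    (hux : ∀ i, u * x i ≠ 1 ∧ u ≠ x i)
    (hvx : ∀ i, v * x i ≠ 1 ∧ v ≠ x i)
    (huv : u ≠ v) (htuv : t * u * v ≠ 1) :
    ∑ σ : Fin n → Bool,
      PhiC t (sgnVar x σ) *
        ∏ i, ((1 - t * u / sgnVar x σ i) / (1 - u / sgnVar x σ i)) *
          ((1 - t * v / sgnVar x σ i) / (1 - v / sgnVar x σ i))
      = (∏ i ∈ Finset.range (n - 2), (t ^ (i + 1) + 1)) *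
        (t ^ (2 * n - 1) * ((1 - t ^ 2 * u * v) / (1 - t * u * v)) +
          t ^ (n - 1) * ((u - t * v) / (u - v)) * RC t x u +
          t ^ (n - 1) * ((v - t * u) / (v - u)) * RC t x v +
          ((1 - u * v) / (1 - t * u * v)) * RC t x u * RC t x v) := by
  obtain ⟨m, rfl⟩ : ∃ m, n = m + 2 := ⟨n - 2, by omega⟩
  have h : Gd x := ⟨hx0, hx2, hxx⟩
  have fac : ∀ w : F, (∀ i, w * x i ≠ 1 ∧ w ≠ x i) → ∀ i,
      x i - w ≠ 0 ∧ (x i)⁻¹ - w ≠ 0 ∧ 1 - w * x i ≠ 0 := by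
    intro w hw i
    refine ⟨sub_ne_zero.2 (hw i).2.symm, ?_, sub_ne_zero.2 (hw i).1.symm⟩
    rw [sub_ne_zero]
    intro h1
    apply (hw i).1
    rw [← h1, inv_mul_cancel₀ (hx0 i)]
  have hD : ∀ w : F, (∀ i, w * x i ≠ 1 ∧ w ≠ x i) → DD x w ≠ 0 := by
    intro w hw
    exact Finset.prod_ne_zero_iff.2 fun i _ => mul_ne_zero (fac w hw i).1 (fac w hw i).2.1
  have hR : ∀ w : F, (∀ i, w * x i ≠ 1 ∧ w ≠ x i) → RC t x w = NN t x w / DD x w := by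
    intro w hw
    unfold RC NN DD
    rw [← Finset.prod_div_distrib]
    refine Finset.prod_congr rfl fun i _ => ?_
    obtain ⟨h1, h2, h3⟩ := fac w hw i
    have h0 := hx0 i
    have h4 : (x i)⁻¹ - w = (1 - w * x i) / x i := by field_simp
    have h5 : 1 - w / x i = (x i - w) / x i := by field_simp
    rw [h4, h5]
    field_simp
  have hA : ∀ w : F, (∀ i, w * x i ≠ 1 ∧ w ≠ x i) → ∀ i y, (y = x i ∨ y = (x i)⁻¹) →
      (1 - t * w / y) / (1 - w / y) = AA t w y / ((x i - w) * ((x i)⁻¹ - w)) := by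
    intro w hw i y hy
    obtain ⟨h1, h2, h3⟩ := fac w hw i
    have h0 := hx0 i
    unfold AA
    rcases hy with rfl | rfl
    · have h5 : 1 - w / x i = (x i - w) / x i := by field_simp
      rw [h5]
      field_simp
    · rw [inv_inv, div_inv_eq_mul, div_inv_eq_mul]
      have h4 : (x i)⁻¹ - w = (1 - w * x i) / x i := by field_simp
      rw [h4]
      field_simp
  have hL : ∑ σ : Fin (m + 2) → Bool,
      PhiC t (sgnVar x σ) *
        ∏ i, ((1 - t * u / sgnVar x σ i) / (1 - u / sgnVar x σ i)) *
          ((1 - t * v / sgnVar x σ i) / (1 - v / sgnVar x σ i))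
      = WW t (fun y => AA t u y * (AA t v y * 1)) x / (DD x u * DD x v) := by
    unfold WW
    rw [Finset.sum_div]
    refine Finset.sum_congr rfl fun σ _ => ?_
    rw [mul_div_assoc]
    congr 1
    unfold DD
    rw [← Finset.prod_mul_distrib, ← Finset.prod_div_distrib]
    refine Finset.prod_congr rfl fun i _ => ?_
    rw [hA u hux i _ (sgn_or x σ i), hA v hvx i _ (sgn_or x σ i), div_mul_div_comm]
    simp only [mul_one]
  have hvp : ∀ p, v ≠ pts x p := by
    intro p hp
    rcases pts_or x p with e | e <;> rw [e] at hp
    · exact (hvx p.1).2 hp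
    · apply (hvx p.1).1; rw [hp, inv_mul_cancel₀ (hx0 _)]
  have main := S2g t h v hv0 hvp u
  have h1 : u - v ≠ 0 := sub_ne_zero.2 huv
  have h2 : 1 - t * u * v ≠ 0 := sub_ne_zero.2 htuv.symm
  have h2' : 1 - t * v * u ≠ 0 := by rwa [mul_right_comm]
  have hDu := hD u hux
  have hDv := hD v hvx
  rw [hL, hR u hux, hR v hvx]
  have e1 : m + 2 - 2 = m := by omega
  have e2 : 2 * (m + 2) - 1 = 2 * m + 3 := by omega
  have e3 : m + 2 - 1 = m + 1 := by omega
  rw [e1, e2, e3]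
  change _ = PP t m * _
  have hW : WW t (fun y => AA t u y * (AA t v y * 1)) x = _ :=
    eq_div_of_mul_eq (mul_ne_zero h1 h2') ((mul_comm _ _).trans main)
  rw [hW]
  have h3 : v - u = -(u - v) := by ring
  rw [h3, mul_right_comm t v u]
  generalize NN t x u = a
  generalize NN t x v = b
  generalize DD x u = c at *
  generalize DD x v = d at *
  generalize PP t m = e
  have e5 : (v - t * u) / -(u - v) = -((v - t * u) / (u - v)) := by rw [div_neg]
  rw [e5]
  generalize hp : u - v = p at *
  generalize hq : 1 - t * u * v = q at *
  field_simp
  ring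

end Helpers

/-- The `r = 2` case of the main rational identity (Corollary 7):
`T(Φ ∏_i ((1-tu/x_i)/(1-u/x_i))((1-tv/x_i)/(1-v/x_i)))
  = ∏_{i=1}^{n-2}(t^i+1) (t^{2n-1}(1-t²uv)/(1-tuv) + t^{n-1}((u-tv)/(u-v))R(u)
     + t^{n-1}((v-tu)/(v-u))R(v) + ((1-uv)/(1-tuv))R(u)R(v))`. -/
theorem stmt8 {F : Type*} [Field F] {n : ℕ} (hn : 2 ≤ n) (x : Fin n → F) (u v t : F)
    (ht0 : t ≠ 0) (hx0 : ∀ i, x i ≠ 0) (hu0 : u ≠ 0) (hv0 : v ≠ 0)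
    (hx2 : ∀ i, (x i) ^ 2 ≠ 1)
    (hxx : ∀ i j, i ≠ j → x i * x j ≠ 1 ∧ x i ≠ x j)
    (hux : ∀ i, u * x i ≠ 1 ∧ u ≠ x i)
    (hvx : ∀ i, v * x i ≠ 1 ∧ v ≠ x i)
    (huv : u ≠ v) (htuv : t * u * v ≠ 1) :
    ∑ σ : Fin n → Bool,
      PhiC t (sgnVar x σ) *
        ∏ i, ((1 - t * u / sgnVar x σ i) / (1 - u / sgnVar x σ i)) *
          ((1 - t * v / sgnVar x σ i) / (1 - v / sgnVar x σ i))
      = (∏ i ∈ Finset.range (n - 2), (t ^ (i + 1) + 1)) *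
        (t ^ (2 * n - 1) * ((1 - t ^ 2 * u * v) / (1 - t * u * v)) +
          t ^ (n - 1) * ((u - t * v) / (u - v)) * RC t x u +
          t ^ (n - 1) * ((v - t * u) / (v - u)) * RC t x v +
          ((1 - u * v) / (1 - t * u * v)) * RC t x u * RC t x v) := by
  have inj := (algebraMap F (AlgebraicClosure F)).injective
  have hs : ∀ σ i, algebraMap F (AlgebraicClosure F) (sgnVar x σ i)
      = sgnVar (fun i => algebraMap F (AlgebraicClosure F) (x i)) σ i := by
    intro σ i
    unfold sgnVar
    split_ifs <;> simp
  have hP : ∀ σ, algebraMap F (AlgebraicClosure F) (PhiC t (sgnVar x σ))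
      = PhiC (algebraMap F (AlgebraicClosure F) t)
        (sgnVar (fun i => algebraMap F (AlgebraicClosure F) (x i)) σ) := by
    intro σ
    simp [PhiC, map_prod, hs]
  have hR : ∀ w, algebraMap F (AlgebraicClosure F) (RC t x w)
      = RC (algebraMap F (AlgebraicClosure F) t)
        (fun i => algebraMap F (AlgebraicClosure F) (x i)) (algebraMap F (AlgebraicClosure F) w) := by
    intro w
    simp [RC, map_prod]
  have ne : ∀ a b : F, a ≠ b →
      algebraMap F (AlgebraicClosure F) a ≠ algebraMap F (AlgebraicClosure F) b :=
    fun a b h h' => h (inj h')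
  apply inj
  have := stmt_inf (F := AlgebraicClosure F) hn (fun i => algebraMap F (AlgebraicClosure F) (x i))
    (algebraMap F (AlgebraicClosure F) u) (algebraMap F (AlgebraicClosure F) v)
    (algebraMap F (AlgebraicClosure F) t)
    (fun i => by simpa using ne _ _ (hx0 i)) (by simpa using ne _ _ hv0)
    (fun i => by simpa using ne _ _ (hx2 i))
    (fun i j hij => ⟨by simpa using ne _ _ (hxx i j hij).1, ne _ _ (hxx i j hij).2⟩)
    (fun i => ⟨by simpa using ne _ _ (hux i).1, ne _ _ (hux i).2⟩)
    (fun i => ⟨by simpa using ne _ _ (hvx i).1, ne _ _ (hvx i).2⟩)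
    (ne _ _ huv) (by simpa using ne _ _ htuv)
  simp only [map_sum, map_prod, map_mul, map_add, map_sub, map_div₀, map_pow, map_one, hs, hP, hR]
  exact this
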